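/- arXiv:2212.14756 — 4 statements merged into one kernel-verified Lean document; each statement's English description precedes it below -/
import Mathlib

section
/- Let (A, g, h, f, p) be a tense H-algebra. Then for all x, y ∈ A: (T13) h((g(x) ⇨ y) ⇨ y) ≤ x and g((h(x) ⇨ y) ⇨ y) ≤ x; and (T14) y ≤ f(x ⊓ p(y)) and y ≤ p(x ⊓ f(y)), where ⇨ denotes Heyting implication. -/
structure IsTenseH {A : Type*} [HeytingAlgebra A] (g h f p : A → A) : Prop where
  t1g : g ⊤ = ⊥
  t1h : h ⊤ = ⊥
  t2f : f ⊥ = ⊤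
  t2p : p ⊥ = ⊤
  t3g : ∀ x y : A, g (x ⊓ y) = g x ⊔ g y
  t3h : ∀ x y : A, h (x ⊓ y) = h x ⊔ h y
  t4f : ∀ x y : A, f (x ⊔ y) = f x ⊓ f y
  t4p : ∀ x y : A, p (x ⊔ y) = p x ⊓ p y
  t5gh : ∀ x : A, g (h x) ≤ x
  t5hg : ∀ x : A, h (g x) ≤ x
  t6pf : ∀ x : A, x ≤ p (f x)
  t6fp : ∀ x : A, x ≤ f (p x)
  t7g : ∀ x y : A, g x ⊓ f y ≤ g (x ⊔ y)
  t7h : ∀ x y : A, h x ⊓ p y ≤ h (x ⊔ y)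
  t8f : ∀ x y : A, f (x ⊓ y) ≤ f x ⊔ g y
  t8p : ∀ x y : A, p (x ⊓ y) ≤ p x ⊔ h y

def IsLatFilter {A : Type*} [HeytingAlgebra A] (F : Set A) : Prop :=
  F.Nonempty ∧ (∀ x y : A, x ∈ F → x ≤ y → y ∈ F) ∧ (∀ x y : A, x ∈ F → y ∈ F → x ⊓ y ∈ F)

def IsLatIdeal {A : Type*} [HeytingAlgebra A] (I : Set A) : Prop :=
  I.Nonempty ∧ (∀ x y : A, x ∈ I → y ≤ x → y ∈ I) ∧ (∀ x y : A, x ∈ I → y ∈ I → x ⊔ y ∈ I)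

def IsPrimeFilter {A : Type*} [HeytingAlgebra A] (F : Set A) : Prop :=
  IsLatFilter F ∧ (⊥ : A) ∉ F ∧ ∀ x y : A, x ⊔ y ∈ F → x ∈ F ∨ y ∈ F

def IsNegTenseFilter {A : Type*} [HeytingAlgebra A] (g h f p : A → A) (F : Set A) : Prop :=
  IsLatFilter F ∧
    ∀ u ∈ ({g, h, f, p} : Set (A → A)), ∀ x y : A, x ⇨ y ∈ F → u y ⇨ u x ∈ F

def thetaF {A : Type*} [HeytingAlgebra A] (F : Set A) (x y : A) : Prop :=
  (x ⇨ y) ⊓ (y ⇨ x) ∈ F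

def IsTenseCongruence {A : Type*} [HeytingAlgebra A] (g h f p : A → A)
    (θ : A → A → Prop) : Prop :=
  Equivalence θ ∧
    (∀ x₁ y₁ x₂ y₂ : A, θ x₁ y₁ → θ x₂ y₂ → θ (x₁ ⊓ x₂) (y₁ ⊓ y₂)) ∧
    (∀ x₁ y₁ x₂ y₂ : A, θ x₁ y₁ → θ x₂ y₂ → θ (x₁ ⊔ x₂) (y₁ ⊔ y₂)) ∧
    (∀ x₁ y₁ x₂ y₂ : A, θ x₁ y₁ → θ x₂ y₂ → θ (x₁ ⇨ x₂) (y₁ ⇨ y₂)) ∧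
    ∀ u ∈ ({g, h, f, p} : Set (A → A)), ∀ x y : A, θ x y → θ (u x) (u y)

def Nop {A : Type*} [HeytingAlgebra A] (g h : A → A) (a : A) : A :=
  (g a ⇨ ⊥) ⊓ (h a ⇨ ⊥)

def NIter {A : Type*} [HeytingAlgebra A] (N : A → A) : ℕ → A → A
  | 0, a => a
  | n + 1, a => N (NIter N n a)

def NPar {A : Type*} [HeytingAlgebra A] (N : A → A) : ℕ → A → A
  | 0, a => NIter N 0 a
  | k + 1, a => NPar N k a ⊓ NIter N (k + 1) a

/-! By (T3)–(T6), the pairs `(h, g)` and `(f, p)` are antitone Galois connections: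
`h x ≤ y ↔ g y ≤ x` and `x ≤ f y ↔ y ≤ p x`. Transposing along them turns (T13) into
`a ≤ (a ⇨ y) ⇨ y` and (T14) into `x ⊓ a ≤ a`. -/

section Antitone

variable {α β : Type*} {u : α → β}

theorem antitone_of_map_inf [SemilatticeInf α] [SemilatticeSup β]
    (hu : ∀ x y, u (x ⊓ y) = u x ⊔ u y) : Antitone u :=
  antitoneOn_univ.1 (.of_map_inf fun x _ y _ => hu x y)

theorem antitone_of_map_sup [SemilatticeSup α] [SemilatticeInf β]
    (hu : ∀ x y, u (x ⊔ y) = u x ⊓ u y) : Antitone u :=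
  antitoneOn_univ.1 (.of_map_sup fun x _ y _ => hu x y)

end Antitone

namespace IsTenseH

variable {A : Type*} [HeytingAlgebra A] {g h f p : A → A}

theorem antitone_g (H : IsTenseH g h f p) : Antitone g :=
  antitone_of_map_inf H.t3g

theorem antitone_h (H : IsTenseH g h f p) : Antitone h :=
  antitone_of_map_inf H.t3h

theorem antitone_f (H : IsTenseH g h f p) : Antitone f :=
  antitone_of_map_sup H.t4f

theorem antitone_p (H : IsTenseH g h f p) : Antitone p :=
  antitone_of_map_sup H.t4p

theorem h_le_iff_g_le (H : IsTenseH g h f p) (x y : A) : h x ≤ y ↔ g y ≤ x :=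
  ⟨fun hxy => (H.antitone_g hxy).trans (H.t5gh x),
    fun hyx => (H.antitone_h hyx).trans (H.t5hg y)⟩

theorem le_f_iff_le_p (H : IsTenseH g h f p) (x y : A) : x ≤ f y ↔ y ≤ p x :=
  ⟨fun hxy => (H.t6pf y).trans (H.antitone_p hxy),
    fun hyx => (H.t6fp x).trans (H.antitone_f hyx)⟩

end IsTenseH

theorem stmt2_general {A B : Type*} [GeneralizedHeytingAlgebra A] [GeneralizedHeytingAlgebra B]
    {g : B → A} {h : A → B} {f : A → B} {p : B → A}
    (hgh : ∀ x y, h x ≤ y ↔ g y ≤ x) (hfp : ∀ x y, x ≤ f y ↔ y ≤ p x) :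
    (∀ x y, h ((g x ⇨ y) ⇨ y) ≤ x) ∧ (∀ x y, g ((h x ⇨ y) ⇨ y) ≤ x) ∧
      (∀ x y, y ≤ f (x ⊓ p y)) ∧ (∀ x y, y ≤ p (x ⊓ f y)) :=
  ⟨fun _ _ => (hgh _ _).2 le_himp_himp, fun _ _ => (hgh _ _).1 le_himp_himp,
    fun _ _ => (hfp _ _).2 inf_le_right, fun _ _ => (hfp _ _).1 inf_le_right⟩

theorem stmt2 {A : Type*} [HeytingAlgebra A] (g h f p : A → A)
    (H : IsTenseH g h f p) :
    (∀ x y : A, h ((g x ⇨ y) ⇨ y) ≤ x) ∧ (∀ x y : A, g ((h x ⇨ y) ⇨ y) ≤ x) ∧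
      (∀ x y : A, y ≤ f (x ⊓ p y)) ∧ (∀ x y : A, y ≤ p (x ⊓ f y)) :=
  stmt2_general H.h_le_iff_g_le H.le_f_iff_le_p
end

section
/- Let (A, g, h, f, p) be a tense H-algebra and let θ be a congruence on (A, g, h, f, p), i.e. an equivalence relation on A compatible with ⊓, ⊔, ⇨, g, h, f and p. Then the equivalence class of 1, namely [1]_θ = {x ∈ A : (x, 1) ∈ θ}, is a negative tense filter of A. -/
/- If `x ⇨ y` is congruent to `⊤`, meeting with `x` shows that `x ⊓ y` is congruent to `x`. Each of
the four operators `u` is antitone, by (T3) and (T4), so `u y ≤ u (x ⊓ y)`, that is,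
`u y ⇨ u (x ⊓ y) = ⊤`. Replacing `u (x ⊓ y)` by the congruent `u x` shows that `u y ⇨ u x` is
congruent to `⊤`. -/

theorem antitone_of_map_inf_eq_sup {α β : Type*} [SemilatticeInf α] [SemilatticeSup β] {u : α → β}
    (hu : ∀ x y, u (x ⊓ y) = u x ⊔ u y) : Antitone u :=
  monotone_toDual_comp_iff.mp (Monotone.of_map_inf hu)

theorem antitone_of_map_sup_eq_inf {α β : Type*} [SemilatticeSup α] [SemilatticeInf β] {u : α → β}
    (hu : ∀ x y, u (x ⊔ y) = u x ⊓ u y) : Antitone u :=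
  monotone_toDual_comp_iff.mp (Monotone.of_map_sup hu)

theorem IsTenseH.antitone {A : Type*} [HeytingAlgebra A] {g h f p : A → A}
    (H : IsTenseH g h f p) : ∀ u ∈ ({g, h, f, p} : Set (A → A)), Antitone u := by
  rintro u (rfl | rfl | rfl | rfl)
  · exact antitone_of_map_inf_eq_sup H.t3g
  · exact antitone_of_map_inf_eq_sup H.t3h
  · exact antitone_of_map_sup_eq_inf H.t4f
  · exact antitone_of_map_sup_eq_inf H.t4p

theorem isLatFilter_setOf_rel_top {A : Type*} [HeytingAlgebra A] {θ : A → A → Prop}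
    (hrefl : ∀ x, θ x x)
    (hinf : ∀ x₁ y₁ x₂ y₂, θ x₁ y₁ → θ x₂ y₂ → θ (x₁ ⊓ x₂) (y₁ ⊓ y₂))
    (hsup : ∀ x₁ y₁ x₂ y₂, θ x₁ y₁ → θ x₂ y₂ → θ (x₁ ⊔ x₂) (y₁ ⊔ y₂)) :
    IsLatFilter {x : A | θ x ⊤} := by
  refine ⟨⟨⊤, hrefl ⊤⟩, fun x y hx hxy ↦ ?_, fun x y hx hy ↦ ?_⟩
  · have hsup_top : θ (x ⊔ y) (⊤ ⊔ y) := hsup _ _ _ _ hx (hrefl y)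
    rwa [sup_eq_right.mpr hxy, top_sup_eq] at hsup_top
  · have hinf_top : θ (x ⊓ y) (⊤ ⊓ ⊤) := hinf _ _ _ _ hx hy
    rwa [top_inf_eq] at hinf_top

section RelHimpTop

variable {A : Type*} [GeneralizedHeytingAlgebra A] {θ : A → A → Prop}

theorem rel_inf_left_of_rel_himp_top (hrefl : ∀ x, θ x x)
    (hinf : ∀ x₁ y₁ x₂ y₂, θ x₁ y₁ → θ x₂ y₂ → θ (x₁ ⊓ x₂) (y₁ ⊓ y₂))
    {x y : A} (hxy : θ (x ⇨ y) ⊤) : θ (x ⊓ y) x := by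
  simpa only [inf_himp, inf_top_eq] using hinf _ _ _ _ (hrefl x) hxy

theorem rel_himp_map_top_of_antitone (hrefl : ∀ x, θ x x)
    (hsymm : ∀ {x y}, θ x y → θ y x)
    (hinf : ∀ x₁ y₁ x₂ y₂, θ x₁ y₁ → θ x₂ y₂ → θ (x₁ ⊓ x₂) (y₁ ⊓ y₂))
    (hhimp : ∀ x₁ y₁ x₂ y₂, θ x₁ y₁ → θ x₂ y₂ → θ (x₁ ⇨ x₂) (y₁ ⇨ y₂))
    {u : A → A} (hu : Antitone u) (hmap : ∀ x y, θ x y → θ (u x) (u y))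
    {x y : A} (hxy : θ (x ⇨ y) ⊤) : θ (u y ⇨ u x) ⊤ := by
  have map_rel : θ (u (x ⊓ y)) (u x) := hmap _ _ (rel_inf_left_of_rel_himp_top hrefl hinf hxy)
  have himp_rel : θ (u y ⇨ u (x ⊓ y)) (u y ⇨ u x) := hhimp _ _ _ _ (hrefl (u y)) map_rel
  have himp_eq_top : u y ⇨ u (x ⊓ y) = ⊤ := himp_eq_top_iff.mpr (hu inf_le_right)
  exact hsymm (himp_eq_top ▸ himp_rel)

end RelHimpTop

theorem stmt9_general {A : Type*} [HeytingAlgebra A] {g h f p : A → A}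
    (hanti : ∀ u ∈ ({g, h, f, p} : Set (A → A)), Antitone u) {θ : A → A → Prop}
    (hθ : IsTenseCongruence g h f p θ) :
    IsNegTenseFilter g h f p {x : A | θ x ⊤} := by
  obtain ⟨hequiv, hinf, hsup, hhimp, hmap⟩ := hθ
  exact ⟨isLatFilter_setOf_rel_top hequiv.refl hinf hsup, fun u hu _ _ hxy ↦
    rel_himp_map_top_of_antitone hequiv.refl hequiv.symm hinf hhimp (hanti u hu) (hmap u hu) hxy⟩

theorem stmt9 {A : Type*} [HeytingAlgebra A] (g h f p : A → A)
    (H : IsTenseH g h f p) (θ : A → A → Prop)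
    (hθ : IsTenseCongruence g h f p θ) :
    IsNegTenseFilter g h f p {x : A | θ x ⊤} :=
  stmt9_general H.antitone hθ
end

section
/- Let (A, g, h, f, p) be a tense H-algebra with 0 ≠ 1, define [N](a) = ¬g(a) ⊓ ¬h(a) (where ¬x = x ⇨ 0), let [N]⁰(a) = a, [N]ⁿ⁺¹(a) = [N]([N]ⁿ(a)), and [N]⁽ᵏ⁾(a) = [N]⁰(a) ⊓ [N]¹(a) ⊓ ⋯ ⊓ [N]ᵏ(a). Then (A, g, h, f, p) is simple — i.e. its only congruences (equivalence relations on A compatible with ⊓, ⊔, ⇨, g, h, f and p) are the equality relation and the total relation A × A — if and only if for every a ∈ A with a ≠ 1 there exists k ∈ ℕ such that [N]⁽ᵏ⁾(a) = 0. -/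
/-!
Congruences of a Heyting algebra with extra unary operations are governed by the filters closed
under an operator `N` that controls these operations, in the sense that
`N (x ⇔ y) ≤ u x ⇔ u y` for every operation `u`. The smallest such filter containing `a` consists
of the elements above some `NPar N k a`; simplicity says that it contains `⊥` as soon as `a ≠ ⊤`.
For tense H-algebras `N c = (g c ⊔ h c)ᶜ` is such an operator: every operation `u` is antitone with
`u (x ⊓ c) ≤ u x ⊔ (g c ⊔ h c)`, so `x ⊓ c ≤ y` gives `u y ≤ u (x ⊓ c) ≤ u x ⊔ (g c ⊔ h c)`, and
meeting with `N c` leaves `N c ⊓ u y ≤ u x`.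
-/

open scoped symmDiff

section GeneralizedHeytingAlgebra

variable {α : Type*} [GeneralizedHeytingAlgebra α]

theorem inf_himp_inf_inf (a b c : α) : a ⊓ (a ⊓ b ⇨ a ⊓ c) = a ⊓ (b ⇨ c) := by
  rw [himp_inf_distrib, himp_eq_top_iff.2 inf_le_left, top_inf_eq, ← himp_himp, inf_himp]

theorem le_bihimp_iff_inf_eq_inf {a b c : α} : a ≤ b ⇔ c ↔ a ⊓ b = a ⊓ c := by
  rw [le_bihimp_iff, inf_comm c, inf_comm b]
  constructor
  · rintro ⟨hcb, hbc⟩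
    exact le_antisymm (le_inf inf_le_left hbc) (le_inf inf_le_left hcb)
  · intro h
    exact ⟨h.symm.trans_le inf_le_right, h.trans_le inf_le_right⟩

end GeneralizedHeytingAlgebra

section HeytingAlgebra

variable {A : Type*} [HeytingAlgebra A]

/-- A congruence of the Heyting algebra `A` expanded by the unary operations in `U`. Compatibility
with the constants is automatic. -/
structure IsHeytingCongruence (U : Set (A → A)) (θ : A → A → Prop) : Prop
    extends Equivalence θ where
  inf : ∀ {x₁ y₁ x₂ y₂ : A}, θ x₁ y₁ → θ x₂ y₂ → θ (x₁ ⊓ x₂) (y₁ ⊓ y₂)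
  sup : ∀ {x₁ y₁ x₂ y₂ : A}, θ x₁ y₁ → θ x₂ y₂ → θ (x₁ ⊔ x₂) (y₁ ⊔ y₂)
  himp : ∀ {x₁ y₁ x₂ y₂ : A}, θ x₁ y₁ → θ x₂ y₂ → θ (x₁ ⇨ x₂) (y₁ ⇨ y₂)
  map : ∀ u ∈ U, ∀ x y : A, θ x y → θ (u x) (u y)

theorem isTenseCongruence_iff {g h f p : A → A} {θ : A → A → Prop} :
    IsTenseCongruence g h f p θ ↔ IsHeytingCongruence {g, h, f, p} θ :=
  ⟨fun ⟨equiv, inf, sup, himp, map⟩ => ⟨equiv, inf _ _ _ _, sup _ _ _ _, himp _ _ _ _, map⟩,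
    fun hθ => ⟨hθ.toEquivalence, fun _ _ _ _ => hθ.inf, fun _ _ _ _ => hθ.sup,
      fun _ _ _ _ => hθ.himp, hθ.map⟩⟩

/-- A normal filter operator for the unary operations in `U`: an operator `N` such that the
filters closed under `N` are exactly the classes of `⊤` modulo congruences. The field
`map_rel_top` stands in for the usual requirement that `N` be a term in the operations of `U`. -/
structure IsNormalFilterOp (U : Set (A → A)) (N : A → A) : Prop where
  map_inf : ∀ x y : A, N (x ⊓ y) = N x ⊓ N y
  map_bihimp_le : ∀ u ∈ U, ∀ x y : A, N (x ⇔ y) ≤ u x ⇔ u y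
  map_rel_top : ∀ {θ : A → A → Prop}, IsHeytingCongruence U θ → ∀ x : A, θ x ⊤ → θ (N x) ⊤

variable {U : Set (A → A)} {N : A → A} {θ : A → A → Prop} {F : Set A}

namespace IsHeytingCongruence

theorem isLatFilter_top_class (hθ : IsHeytingCongruence U θ) : IsLatFilter {x | θ x ⊤} := by
  refine ⟨⟨⊤, hθ.refl ⊤⟩, fun x y hx hxy => ?_, fun x y hx hy => ?_⟩
  · simpa [sup_eq_right.2 hxy] using hθ.sup hx (hθ.refl y)
  · simpa using hθ.inf hx hy

theorem rel_bihimp_top (hθ : IsHeytingCongruence U θ) {x y : A} (hxy : θ x y) :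
    θ (x ⇔ y) ⊤ := by
  simpa [bihimp] using hθ.inf (hθ.himp (hθ.refl y) hxy) (hθ.himp hxy (hθ.refl y))

theorem rel_of_rel_bot_top (hθ : IsHeytingCongruence U θ) (hbot : θ ⊥ ⊤) (x y : A) : θ x y := by
  have rel_bot (z : A) : θ ⊥ z := by simpa using hθ.inf hbot (hθ.refl z)
  exact hθ.trans (hθ.symm (rel_bot x)) (rel_bot y)

end IsHeytingCongruence

theorem nPar_antitone (N : A → A) (a : A) : Antitone fun k => NPar N k a :=
  antitone_nat_of_succ_le fun _ => inf_le_left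

theorem nPar_succ_le_map_nPar (hN : ∀ x y : A, N (x ⊓ y) = N x ⊓ N y) (a : A) (k : ℕ) :
    NPar N (k + 1) a ≤ N (NPar N k a) := by
  induction k with
  | zero => exact inf_le_right
  | succ k ih =>
    calc NPar N (k + 2) a = NPar N (k + 1) a ⊓ N (NIter N (k + 1) a) := rfl
      _ ≤ N (NPar N k a) ⊓ N (NIter N (k + 1) a) := inf_le_inf_right _ ih
      _ = N (NPar N (k + 1) a) := (hN _ _).symm

theorem thetaF_iff_bihimp_mem {x y : A} : thetaF F x y ↔ x ⇔ y ∈ F := by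
  rw [thetaF, bihimp, inf_comm]

namespace IsLatFilter

theorem nPar_mem (hF : IsLatFilter F) (hFN : ∀ x ∈ F, N x ∈ F) {a : A} (ha : a ∈ F) (k : ℕ) :
    NPar N k a ∈ F := by
  have nIter_mem (n : ℕ) : NIter N n a ∈ F := by
    induction n with
    | zero => exact ha
    | succ n ih => exact hFN _ ih
  induction k with
  | zero => exact ha
  | succ k ih => exact hF.2.2 _ _ ih (nIter_mem (k + 1))

theorem thetaF_iff_exists_inf_eq_inf (hF : IsLatFilter F) {x y : A} :
    thetaF F x y ↔ ∃ c ∈ F, c ⊓ x = c ⊓ y := by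
  simp only [← le_bihimp_iff_inf_eq_inf, thetaF_iff_bihimp_mem]
  exact ⟨fun h => ⟨_, h, le_rfl⟩, fun ⟨c, hc, hcxy⟩ => hF.2.1 c _ hc hcxy⟩

theorem exists_common_inf_eq_inf (hF : IsLatFilter F) {x₁ y₁ x₂ y₂ : A}
    (h₁ : thetaF F x₁ y₁) (h₂ : thetaF F x₂ y₂) :
    ∃ c ∈ F, c ⊓ x₁ = c ⊓ y₁ ∧ c ⊓ x₂ = c ⊓ y₂ := by
  obtain ⟨c, hc, hc₁⟩ := hF.thetaF_iff_exists_inf_eq_inf.1 h₁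
  obtain ⟨d, hd, hd₂⟩ := hF.thetaF_iff_exists_inf_eq_inf.1 h₂
  refine ⟨c ⊓ d, hF.2.2 c d hc hd, ?_, ?_⟩
  · rw [inf_right_comm, hc₁, inf_right_comm]
  · rw [inf_assoc, hd₂, inf_assoc]

theorem equivalence_thetaF (hF : IsLatFilter F) : Equivalence (thetaF F) where
  refl x := hF.thetaF_iff_exists_inf_eq_inf.2 <| hF.1.imp fun _ hc => ⟨hc, rfl⟩
  symm h := by rwa [thetaF_iff_bihimp_mem, bihimp_comm, ← thetaF_iff_bihimp_mem]
  trans h₁ h₂ := by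
    obtain ⟨c, hc, hxy, hyz⟩ := hF.exists_common_inf_eq_inf h₁ h₂
    exact hF.thetaF_iff_exists_inf_eq_inf.2 ⟨c, hc, hxy.trans hyz⟩

theorem isHeytingCongruence_thetaF (hF : IsLatFilter F)
    (hmap : ∀ u ∈ U, ∀ x y : A, x ⇔ y ∈ F → u x ⇔ u y ∈ F) :
    IsHeytingCongruence U (thetaF F) where
  toEquivalence := hF.equivalence_thetaF
  inf h₁ h₂ := by
    obtain ⟨c, hc, e₁, e₂⟩ := hF.exists_common_inf_eq_inf h₁ h₂
    refine hF.thetaF_iff_exists_inf_eq_inf.2 ⟨c, hc, ?_⟩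
    rw [inf_inf_distrib_left, e₁, e₂, ← inf_inf_distrib_left]
  sup h₁ h₂ := by
    obtain ⟨c, hc, e₁, e₂⟩ := hF.exists_common_inf_eq_inf h₁ h₂
    refine hF.thetaF_iff_exists_inf_eq_inf.2 ⟨c, hc, ?_⟩
    rw [inf_sup_left, e₁, e₂, ← inf_sup_left]
  himp h₁ h₂ := by
    obtain ⟨c, hc, e₁, e₂⟩ := hF.exists_common_inf_eq_inf h₁ h₂
    refine hF.thetaF_iff_exists_inf_eq_inf.2 ⟨c, hc, ?_⟩
    rw [← inf_himp_inf_inf, e₁, e₂, inf_himp_inf_inf]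
  map u hu x y hxy := by
    rw [thetaF_iff_bihimp_mem] at hxy ⊢
    exact hmap u hu x y hxy

end IsLatFilter

/-- The filter of `A` closed under `N` that is generated by `a`, provided that `N` preserves `⊓`. -/
def generatedFilter (N : A → A) (a : A) : Set A :=
  {x | ∃ k, NPar N k a ≤ x}

theorem isLatFilter_generatedFilter (N : A → A) (a : A) : IsLatFilter (generatedFilter N a) := by
  refine ⟨⟨a, 0, le_rfl⟩, fun x y ⟨k, hk⟩ hxy => ⟨k, hk.trans hxy⟩, ?_⟩
  rintro x y ⟨k, hk⟩ ⟨l, hl⟩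
  exact ⟨max k l, le_inf ((nPar_antitone N a (le_max_left k l)).trans hk)
    ((nPar_antitone N a (le_max_right k l)).trans hl)⟩

theorem map_mem_generatedFilter (hN : ∀ x y : A, N (x ⊓ y) = N x ⊓ N y) {a x : A}
    (hx : x ∈ generatedFilter N a) : N x ∈ generatedFilter N a := by
  obtain ⟨k, hk⟩ := hx
  exact ⟨k + 1, (nPar_succ_le_map_nPar hN a k).trans (Monotone.of_map_inf hN hk)⟩

namespace IsNormalFilterOp

theorem isHeytingCongruence_thetaF_generatedFilter (hN : IsNormalFilterOp U N) (a : A) :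
    IsHeytingCongruence U (thetaF (generatedFilter N a)) := by
  have hF := isLatFilter_generatedFilter N a
  exact hF.isHeytingCongruence_thetaF fun u hu x y hxy =>
    hF.2.1 _ _ (map_mem_generatedFilter hN.map_inf hxy) (hN.map_bihimp_le u hu x y)

theorem exists_nPar_eq_bot (hN : IsNormalFilterOp U N)
    (hsimple : ∀ θ : A → A → Prop, IsHeytingCongruence U θ →
      (∀ x y : A, θ x y ↔ x = y) ∨ (∀ x y : A, θ x y))
    {a : A} (ha : a ≠ ⊤) : ∃ k : ℕ, NPar N k a = ⊥ := by
  rcases hsimple _ (hN.isHeytingCongruence_thetaF_generatedFilter a) with heq | htotal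
  · have hrel : thetaF (generatedFilter N a) a ⊤ := ⟨0, by simp [NPar, NIter]⟩
    exact absurd ((heq a ⊤).1 hrel) ha
  · obtain ⟨k, hk⟩ := htotal ⊥ ⊤
    exact ⟨k, by simpa using hk⟩

theorem rel_of_ne (hN : IsNormalFilterOp U N)
    (hpar : ∀ a : A, a ≠ ⊤ → ∃ k : ℕ, NPar N k a = ⊥)
    (hθ : IsHeytingCongruence U θ) {x y : A} (hxy : θ x y) (hne : x ≠ y) (z w : A) : θ z w := by
  obtain ⟨k, hk⟩ := hpar (x ⇔ y) (mt bihimp_eq_top.1 hne)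
  have hmem : NPar N k (x ⇔ y) ∈ {z | θ z ⊤} :=
    hθ.isLatFilter_top_class.nPar_mem (hN.map_rel_top hθ) (hθ.rel_bihimp_top hxy) k
  exact hθ.rel_of_rel_bot_top (hk ▸ hmem) z w

end IsNormalFilterOp

theorem stmt16_general (hN : IsNormalFilterOp U N) :
    (∀ θ : A → A → Prop, IsHeytingCongruence U θ →
        (∀ x y : A, θ x y ↔ x = y) ∨ (∀ x y : A, θ x y)) ↔
      ∀ a : A, a ≠ ⊤ → ∃ k : ℕ, NPar N k a = ⊥ := by
  refine ⟨fun hsimple a => hN.exists_nPar_eq_bot hsimple, fun hpar θ hθ => ?_⟩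
  by_cases heq : ∀ x y, θ x y → x = y
  · exact Or.inl fun x y => ⟨heq x y, fun h => h ▸ hθ.refl x⟩
  · push Not at heq
    obtain ⟨x, y, hxy, hne⟩ := heq
    exact Or.inr (hN.rel_of_ne hpar hθ hxy hne)

theorem nop_eq_compl_sup (g h : A → A) (a : A) : Nop g h a = (g a ⊔ h a)ᶜ := by
  rw [Nop, himp_bot, himp_bot, compl_sup]

theorem compl_inf_map_le_map {β : Type*} [SemilatticeInf β] {u m : β → A} (hu : Antitone u)
    (hum : ∀ x y : β, u (x ⊓ y) ≤ u x ⊔ m y) {c x y : β} (hc : x ⊓ c ≤ y) :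
    (m c)ᶜ ⊓ u y ≤ u x := by
  have h_le : u y ≤ u x ⊔ m c :=
    calc u y ≤ u (x ⊓ c) := hu hc
      _ ≤ u x ⊔ m c := hum x c
  calc (m c)ᶜ ⊓ u y ≤ (m c)ᶜ ⊓ (u x ⊔ m c) := inf_le_inf_left _ h_le
    _ = (m c)ᶜ ⊓ u x := by rw [inf_sup_left, compl_inf_self, sup_bot_eq]
    _ ≤ u x := inf_le_right

theorem isNormalFilterOp_nop {g h : A → A} (hg : g ∈ U) (hh : h ∈ U)
    (g_top : g ⊤ = ⊥) (h_top : h ⊤ = ⊥)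
    (g_inf : ∀ x y : A, g (x ⊓ y) = g x ⊔ g y) (h_inf : ∀ x y : A, h (x ⊓ y) = h x ⊔ h y)
    (hU : ∀ u ∈ U, Antitone u ∧ ∀ x y : A, u (x ⊓ y) ≤ u x ⊔ (g y ⊔ h y)) :
    IsNormalFilterOp U (Nop g h) where
  map_inf x y := by
    rw [nop_eq_compl_sup, g_inf, h_inf, sup_sup_sup_comm, compl_sup, ← nop_eq_compl_sup,
      ← nop_eq_compl_sup]
  map_bihimp_le u hu x y := by
    obtain ⟨hanti, hres⟩ := hU u hu
    obtain ⟨hyx, hxy⟩ := le_bihimp_iff.1 (le_refl (x ⇔ y))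
    rw [nop_eq_compl_sup, le_bihimp_iff, inf_comm (u y), inf_comm (u x)]
    exact ⟨compl_inf_map_le_map hanti hres hxy, compl_inf_map_le_map hanti hres hyx⟩
  map_rel_top hθ x hx := by
    simpa [Nop, g_top, h_top] using
      hθ.inf (hθ.himp (hθ.map g hg x ⊤ hx) (hθ.refl ⊥)) (hθ.himp (hθ.map h hh x ⊤ hx) (hθ.refl ⊥))

theorem IsTenseH.isNormalFilterOp {g h f p : A → A} (H : IsTenseH g h f p) :
    IsNormalFilterOp {g, h, f, p} (Nop g h) := by
  refine isNormalFilterOp_nop (by simp) (by simp) H.t1g H.t1h H.t3g H.t3h ?_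
  rintro u (rfl | rfl | rfl | rfl)
  · exact ⟨monotone_toDual_comp_iff.1 (.of_map_inf H.t3g), fun x y =>
      (H.t3g x y).trans_le (sup_le_sup_left le_sup_left _)⟩
  · exact ⟨monotone_toDual_comp_iff.1 (.of_map_inf H.t3h), fun x y =>
      (H.t3h x y).trans_le (sup_le_sup_left le_sup_right _)⟩
  · exact ⟨monotone_toDual_comp_iff.1 (.of_map_sup H.t4f), fun x y =>
      (H.t8f x y).trans (sup_le_sup_left le_sup_left _)⟩
  · exact ⟨monotone_toDual_comp_iff.1 (.of_map_sup H.t4p), fun x y =>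
      (H.t8p x y).trans (sup_le_sup_left le_sup_right _)⟩

end HeytingAlgebra

theorem stmt16 {A : Type*} [HeytingAlgebra A] (g h f p : A → A)
    (H : IsTenseH g h f p) (h01 : (⊥ : A) ≠ ⊤) :
    (∀ θ : A → A → Prop, IsTenseCongruence g h f p θ →
        (∀ x y : A, θ x y ↔ x = y) ∨ (∀ x y : A, θ x y)) ↔
      ∀ a : A, a ≠ ⊤ → ∃ k : ℕ, NPar (Nop g h) k a = ⊥ := by
  simpa only [isTenseCongruence_iff] using stmt16_general H.isNormalFilterOp
end

section
/- Let (A, g, h, f, p) be a tense H-algebra, let S be a prime filter of A and a ∈ A. Define, for prime filters S, T: R_A(S, T) if and only if (for all x, f(x) ∈ S implies x ∉ T) and (for all x, x ∉ T implies g(x) ∈ S). Then f(a) ∈ S if and only if for every prime filter T of A with R_A(S, T), one has a ∉ T. -/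
/-!
The elements `x` with `f x ∈ S` form an ideal `I`, and those with `g x ∉ S` form a filter `G`;
a prime filter `T` is related to `S` precisely when `G ⊆ T` and `T` misses `I`. If `f a ∉ S`, then
`f (a ⊓ z) ≤ f a ⊔ g z` and primality of `S` give `a ⊓ z ∉ I` for all `z ∈ G`, so the filter
generated by `G` and `a` misses `I` and Stone's prime filter theorem provides a `T` containing `a`.
-/

open Order OrderDual

section PrimeFilters

variable {α : Type*}

theorem isIdeal_iff_bot_mem_and_sup_mem_iff [SemilatticeSup α] [OrderBot α] {I : Set α} :
    IsIdeal I ↔ ⊥ ∈ I ∧ ∀ x y, x ⊔ y ∈ I ↔ x ∈ I ∧ y ∈ I := by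
  constructor
  · intro hI
    exact ⟨hI.toIdeal.bot_mem, fun _ _ => Ideal.sup_mem_iff (I := hI.toIdeal)⟩
  · rintro ⟨bot_mem, sup_mem_iff⟩
    refine ⟨fun x y hyx hx => ?_, ⟨⊥, bot_mem⟩, fun x hx y hy => ?_⟩
    · rw [← sup_eq_right.2 hyx, sup_mem_iff] at hx
      exact hx.1
    · exact ⟨x ⊔ y, (sup_mem_iff x y).2 ⟨hx, hy⟩, le_sup_left, le_sup_right⟩

theorem isPFilter_iff_top_mem_and_inf_mem_iff [SemilatticeInf α] [OrderTop α] {F : Set α} :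
    IsPFilter F ↔ ⊤ ∈ F ∧ ∀ x y, x ⊓ y ∈ F ↔ x ∈ F ∧ y ∈ F :=
  isIdeal_iff_bot_mem_and_sup_mem_iff (α := αᵒᵈ)

theorem pfilter_isPrime_iff_bot_notMem_and_sup_mem_iff [SemilatticeSup α] [OrderBot α]
    {F : PFilter α} : F.IsPrime ↔ ⊥ ∉ F ∧ ∀ x y, x ⊔ y ∈ F ↔ x ∈ F ∨ y ∈ F := by
  simp only [PFilter.isPrime_iff, isIdeal_iff_bot_mem_and_sup_mem_iff, Set.mem_compl_iff,
    SetLike.mem_coe, ← not_or, not_iff_not]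

theorem exists_isPrime_pfilter_of_inf_notMem_ideal [DistribLattice α] {G : PFilter α}
    {I : Ideal α} {a : α} (h : ∀ z ∈ G, a ⊓ z ∉ I) :
    ∃ T : PFilter α, T.IsPrime ∧ G ≤ T ∧ a ∈ T ∧ ∀ x ∈ I, x ∉ T := by
  let K : PFilter α := ⟨G.dual ⊔ Ideal.principal (toDual a)⟩
  have hGK : G ≤ K := (le_sup_left : G.dual ≤ K.dual)
  have haK : a ∈ K := Ideal.principal_le_iff.1 (le_sup_right : _ ≤ K.dual)
  have hKI : Disjoint (K : Set α) I := by
    rw [Set.disjoint_left]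
    intro x hxK hxI
    obtain ⟨z, hz, hzx⟩ := (Lattice.mem_ideal_sup_principal _ _ _).1 hxK
    have haz : a ⊓ ofDual z ≤ x := inf_comm a (ofDual z) ▸ hzx
    exact h (ofDual z) hz (I.lower haz hxI)
  obtain ⟨J, hJ, hIJ, hKJ⟩ := DistribLattice.prime_ideal_of_disjoint_filter_ideal hKI
  have hKT : ∀ x ∈ K, x ∉ J := fun _ hx => Set.disjoint_left.1 hKJ hx
  exact ⟨hJ.toPrimePair.F, hJ.toPrimePair.F_isPrime, fun x hx => hKT x (hGK hx), hKT a haK,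
    fun x hx hxT => hxT (hIJ hx)⟩

end PrimeFilters

section CanonicalRelation

variable {A B : Type*}

theorem isIdeal_setOf_map_mem_pfilter [SemilatticeSup A] [OrderBot A] [SemilatticeInf B]
    [OrderTop B] {f : A → B} (map_bot : f ⊥ = ⊤) (map_sup : ∀ x y, f (x ⊔ y) = f x ⊓ f y)
    (S : PFilter B) : IsIdeal {x | f x ∈ S} := by
  simp [isIdeal_iff_bot_mem_and_sup_mem_iff, map_bot, map_sup]

theorem isPFilter_setOf_map_notMem_pfilter [SemilatticeInf A] [OrderTop A] [SemilatticeSup B]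
    [OrderBot B] {g : A → B} (map_top : g ⊤ = ⊥) (map_inf : ∀ x y, g (x ⊓ y) = g x ⊔ g y)
    {S : PFilter B} (hS : S.IsPrime) : IsPFilter {x | g x ∉ S} := by
  obtain ⟨bot_notMem, sup_mem_iff⟩ := pfilter_isPrime_iff_bot_notMem_and_sup_mem_iff.1 hS
  simp [isPFilter_iff_top_mem_and_inf_mem_iff, map_top, map_inf, bot_notMem, sup_mem_iff]

/-- A pair of negative modalities, `g` (possibly not) and `f` (necessarily not), linked by the
interaction law `map_inf_le`: the fragment of a tense H-algebra on which the prime filter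
representation of `f` rests. -/
structure IsNegModalPair [Lattice A] [BoundedOrder A] [Lattice B] [BoundedOrder B]
    (g f : A → B) : Prop where
  map_top : g ⊤ = ⊥
  map_bot : f ⊥ = ⊤
  map_inf : ∀ x y, g (x ⊓ y) = g x ⊔ g y
  map_sup : ∀ x y, f (x ⊔ y) = f x ⊓ f y
  map_inf_le : ∀ x y, f (x ⊓ y) ≤ f x ⊔ g y

/-- The canonical accessibility relation `R_A(S, T)` between prime filters induced by the negative
modalities `g` and `f`. It is defined on arbitrary sets so that it applies both to `PFilter`s and
to sets satisfying `IsPrimeFilter`. -/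
def CanonicalRel (g f : A → B) (S : Set B) (T : Set A) : Prop :=
  (∀ x, f x ∈ S → x ∉ T) ∧ ∀ x, x ∉ T → g x ∈ S

variable [DistribLattice A] [BoundedOrder A] [Lattice B] [BoundedOrder B] {g f : A → B}
  {S : PFilter B} {a : A}

theorem IsNegModalPair.exists_canonicalRel_of_map_notMem (H : IsNegModalPair g f)
    (hS : S.IsPrime) (ha : f a ∉ S) :
    ∃ T : PFilter A, T.IsPrime ∧ CanonicalRel g f S T ∧ a ∈ T := by
  let I := (isIdeal_setOf_map_mem_pfilter H.map_bot H.map_sup S).toIdeal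
  let G := (isPFilter_setOf_map_notMem_pfilter H.map_top H.map_inf hS).toPFilter
  have inf_notMem : ∀ z ∈ G, a ⊓ z ∉ I := by
    intro z hz haz
    have hfg : f a ⊔ g z ∈ S := PFilter.mem_of_le (H.map_inf_le a z) haz
    obtain ⟨-, sup_mem_iff⟩ := pfilter_isPrime_iff_bot_notMem_and_sup_mem_iff.1 hS
    exact ((sup_mem_iff _ _).1 hfg).elim ha hz
  obtain ⟨T, hT, hGT, haT, hIT⟩ := exists_isPrime_pfilter_of_inf_notMem_ideal inf_notMem
  exact ⟨T, hT, ⟨hIT, fun x hx => by_contra fun hgx => hx (hGT hgx)⟩, haT⟩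

theorem stmt19_general (H : IsNegModalPair g f) (hS : S.IsPrime) :
    f a ∈ S ↔ ∀ T : PFilter A, T.IsPrime → CanonicalRel g f S T → a ∉ T := by
  refine ⟨fun ha T _ hST => hST.1 a ha, fun h => by_contra fun ha => ?_⟩
  obtain ⟨T, hT, hST, haT⟩ := H.exists_canonicalRel_of_map_notMem hS ha
  exact h T hT hST haT

end CanonicalRelation

section TenseHAlgebra

variable {A : Type*} [HeytingAlgebra A]

theorem IsTenseH.isNegModalPair {g h f p : A → A} (H : IsTenseH g h f p) : IsNegModalPair g f :=
  ⟨H.t1g, H.t2f, H.t3g, H.t4f, H.t8f⟩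

theorem isLatFilter_iff_isPFilter {F : Set A} : IsLatFilter F ↔ IsPFilter F := by
  constructor
  · rintro ⟨nonempty, mem_of_le, inf_mem⟩
    exact .of_def nonempty
      (fun x hx y hy => ⟨x ⊓ y, inf_mem x y hx hy, inf_le_left, inf_le_right⟩)
      fun hxy hx => mem_of_le _ _ hx hxy
  · intro hF
    exact ⟨hF.toPFilter.nonempty, fun _ _ hx hxy => PFilter.mem_of_le (F := hF.toPFilter) hxy hx,
      fun _ _ => PFilter.inf_mem (F := hF.toPFilter)⟩

theorem isPrimeFilter_coe_iff {F : PFilter A} : IsPrimeFilter (F : Set A) ↔ F.IsPrime := by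
  have sup_mem_iff : ∀ x y, (x ⊔ y ∈ F ↔ x ∈ F ∨ y ∈ F) ↔ (x ⊔ y ∈ F → x ∈ F ∨ y ∈ F) :=
    fun _ _ => ⟨Iff.mp, fun h =>
      ⟨h, Or.rec (PFilter.mem_of_le le_sup_left) (PFilter.mem_of_le le_sup_right)⟩⟩
  simp only [IsPrimeFilter, isLatFilter_iff_isPFilter, F.isPFilter, true_and, SetLike.mem_coe,
    pfilter_isPrime_iff_bot_notMem_and_sup_mem_iff, sup_mem_iff]

theorem isPrimeFilter_iff_exists_pfilter {F : Set A} :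
    IsPrimeFilter F ↔ ∃ P : PFilter A, P.IsPrime ∧ (P : Set A) = F := by
  constructor
  · intro hF
    let P := (isLatFilter_iff_isPFilter.1 hF.1).toPFilter
    exact ⟨P, (isPrimeFilter_coe_iff (F := P)).1 hF, rfl⟩
  · rintro ⟨P, hP, rfl⟩
    exact isPrimeFilter_coe_iff.2 hP

end TenseHAlgebra

theorem stmt19 {A : Type*} [HeytingAlgebra A] (g h f p : A → A)
    (H : IsTenseH g h f p) (S : Set A) (hS : IsPrimeFilter S) (a : A) :
    f a ∈ S ↔
      ∀ T : Set A, IsPrimeFilter T →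
        ((∀ x : A, f x ∈ S → x ∉ T) ∧ (∀ x : A, x ∉ T → g x ∈ S)) → a ∉ T := by
  obtain ⟨P, hP, rfl⟩ := isPrimeFilter_iff_exists_pfilter.1 hS
  simpa [isPrimeFilter_iff_exists_pfilter, CanonicalRel] using stmt19_general H.isNegModalPair hP
end
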